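/- Let k be a field, n a natural number, and A and B noetherian k-algebras such that A ⊗_k B is noetherian. If A and B both satisfy Serre's condition (S_n), then A ⊗_k B satisfies the condition (C_{n+1}). -/

import Mathlib

noncomputable section

open TensorProduct

universe u v w

/-- The depth of the ideal `I` on the module `M`: the supremum of lengths of
`M`-regular sequences with entries in `I`. -/
noncomputable def idealDepth (A : Type u) [CommRing A] (I : Ideal A)
    (M : Type v) [AddCommGroup M] [Module A M] : ℕ∞ :=
  sSup {n : ℕ∞ | ∃ rs : List A, (rs.length : ℕ∞) = n ∧ (∀ r ∈ rs, r ∈ I) ∧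
    RingTheory.Sequence.IsRegular M rs}

/-- The depth of a module over a local ring. -/
noncomputable def localDepth (A : Type u) [CommRing A] [IsLocalRing A]
    (M : Type v) [AddCommGroup M] [Module A M] : ℕ∞ :=
  idealDepth A (IsLocalRing.maximalIdeal A) M

/-- The (Krull) dimension of a module, i.e. the Krull dimension of its support. -/
noncomputable def supportDim (A : Type u) [CommRing A]
    (M : Type v) [AddCommGroup M] [Module A M] : WithBot ℕ∞ :=
  Order.krullDim (Module.support A M)

/-- `depth (M_P)` : the depth of the localization of `M` at a prime `P`,
over the local ring `A_P`. -/
noncomputable def depthAt (A : Type u) [CommRing A]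
    (M : Type v) [AddCommGroup M] [Module A M] (P : PrimeSpectrum A) : ℕ∞ :=
  localDepth (Localization.AtPrime P.asIdeal) (LocalizedModule P.asIdeal.primeCompl M)

/-- `ht_M(P) = dim (M_P)` : the height of a prime `P` in the support of `M`,
i.e. the dimension of the localized module `M_P` over `A_P`. -/
noncomputable def heightAt (A : Type u) [CommRing A]
    (M : Type v) [AddCommGroup M] [Module A M] (P : PrimeSpectrum A) : WithBot ℕ∞ :=
  supportDim (Localization.AtPrime P.asIdeal) (LocalizedModule P.asIdeal.primeCompl M)

/-- Serre's condition `(S_n)` for a module: for every `P` in the support,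
`depth (M_P) ≥ min (n, ht_M(P))`. -/
def SerreCondS (A : Type u) [CommRing A] (n : ℕ)
    (M : Type v) [AddCommGroup M] [Module A M] : Prop :=
  ∀ P ∈ Module.support A M,
    min (n : WithBot ℕ∞) (heightAt A M P) ≤ (depthAt A M P : WithBot ℕ∞)

/-- The condition `(C_n)` for a module: for every `P` in the support,
`depth (M_P) ≥ min (n, ht_M(P)) - 1`, equivalently
`min (n, ht_M(P)) ≤ depth (M_P) + 1`. -/
def CondC (A : Type u) [CommRing A] (n : ℕ)
    (M : Type v) [AddCommGroup M] [Module A M] : Prop :=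
  ∀ P ∈ Module.support A M,
    min (n : WithBot ℕ∞) (heightAt A M P) ≤ (depthAt A M P : WithBot ℕ∞) + 1

/-- A module `M` is almost Cohen-Macaulay if `depth(P, M) = depth (M_P)` for every
`P` in the support of `M` (Kang's definition). -/
def IsAlmostCMModule (A : Type u) [CommRing A]
    (M : Type v) [AddCommGroup M] [Module A M] : Prop :=
  ∀ P ∈ Module.support A M, idealDepth A P.asIdeal M = depthAt A M P

/-- A module `M` is Cohen-Macaulay if `depth (M_P) = dim (M_P)` for every `P` in its
support. -/
def IsCMModule (A : Type u) [CommRing A]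
    (M : Type v) [AddCommGroup M] [Module A M] : Prop :=
  ∀ P ∈ Module.support A M, (depthAt A M P : WithBot ℕ∞) = heightAt A M P

/-- A ring is almost Cohen-Macaulay if it is an almost Cohen-Macaulay module over
itself. -/
abbrev IsAlmostCMRing (A : Type u) [CommRing A] : Prop := IsAlmostCMModule A A

/-- A ring is Cohen-Macaulay if it is a Cohen-Macaulay module over itself, i.e. all its
localizations at primes have depth equal to dimension. -/
abbrev IsCMRing (A : Type u) [CommRing A] : Prop := IsCMModule A A

/-- A ring satisfies `(C_n)` if it does so as a module over itself. -/
abbrev RingCondC (A : Type u) [CommRing A] (n : ℕ) : Prop := CondC A n A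

/-- A ring satisfies `(S_n)` if it does so as a module over itself. -/
abbrev RingSerreCondS (A : Type u) [CommRing A] (n : ℕ) : Prop := SerreCondS A n A

/-! A flat ring extension `R → S` inherits `(S_n)` from `R` and its fibres. Since `A → A ⊗ B` is
flat with fibres `κ(p) ⊗ B`, it is enough to treat a field extension `K/k` and the ring `K ⊗ B`.

For a flat local homomorphism `R → S`, the local criterion of flatness lifts a regular sequence on
the closed fibre to a regular sequence `t` on `S` with `S/(t)` flat over `R`; it can then be
prolonged by a regular sequence of `R`. So `depth S` is at least the sum of the depths of `R` and of
the closed fibre, while `dim S` is at most the sum of their dimensions.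

For a simple extension `K = k(x)` the fibres of `B → K ⊗ B` are noetherian rings `κ ⊗ k(x)`, whose
local rings are quotients of those of `κ[X]` and hence have principal maximal ideals. Finitely
generated extensions follow by induction. In general a prime of `K ⊗ B` is extended from `F ⊗ B`
for some finitely generated `F/k`, and the corresponding closed fibre is a field. -/

open IsLocalRing RingTheory.Sequence
open scoped Pointwise

section Diagram

variable {R N N' C M₁ M₂ M₃ : Type*} [CommRing R] [AddCommGroup N] [Module R N]
  [AddCommGroup N'] [Module R N'] [Module.Flat R N'] [AddCommGroup C] [Module R C]
  [AddCommGroup M₁] [Module R M₁] [AddCommGroup M₂] [Module R M₂] [AddCommGroup M₃] [Module R M₃]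
  {u : N →ₗ[R] N'} {q : N' →ₗ[R] C} {f : M₁ →ₗ[R] M₂} {g : M₂ →ₗ[R] M₃}

theorem rTensor_injective_of_exact (hf : Function.Injective f) (hfg : Function.Exact f g)
    (hg : Function.Surjective g) (h₁ : Function.Injective (u.rTensor M₁))
    (h₃ : Function.Injective (u.rTensor M₃)) : Function.Injective (u.rTensor M₂) := by
  rw [injective_iff_map_eq_zero]
  intro x hx
  have hgx : g.lTensor N x = 0 := h₃ <| by
    rw [← LinearMap.comp_apply, LinearMap.rTensor_comp_lTensor, ← LinearMap.lTensor_comp_rTensor,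
      LinearMap.comp_apply, hx, map_zero, map_zero]
  obtain ⟨y, rfl⟩ := (lTensor_exact N hfg hg x).1 hgx
  have hy : u.rTensor M₁ y = 0 := Module.Flat.lTensor_preserves_injective_linearMap f hf <| by
    rw [← LinearMap.comp_apply, LinearMap.lTensor_comp_rTensor, ← LinearMap.rTensor_comp_lTensor,
      LinearMap.comp_apply, hx, map_zero]
  rw [(map_eq_zero_iff _ h₁).1 hy, map_zero]

theorem lTensor_injective_of_exact (hf : Function.Injective f) (hfg : Function.Exact f g)
    (hg : Function.Surjective g) (huq : Function.Exact u q) (hq : Function.Surjective q)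
    (h₃ : Function.Injective (u.rTensor M₃)) : Function.Injective (f.lTensor C) := by
  rw [injective_iff_map_eq_zero]
  intro c hc
  obtain ⟨y, rfl⟩ := q.rTensor_surjective M₁ hq c
  rw [← LinearMap.comp_apply, LinearMap.lTensor_comp_rTensor, ← LinearMap.rTensor_comp_lTensor,
    LinearMap.comp_apply] at hc
  obtain ⟨z, hz⟩ := (rTensor_exact M₂ huq hq _).1 hc
  have hgz : g.lTensor N z = 0 := h₃ <| by
    rw [← LinearMap.comp_apply, LinearMap.rTensor_comp_lTensor, ← LinearMap.lTensor_comp_rTensor,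
      LinearMap.comp_apply, hz, map_zero]
    exact (lTensor_exact N' hfg hg).apply_apply_eq_zero y
  obtain ⟨w, rfl⟩ := (lTensor_exact N hfg hg z).1 hgz
  have hw : u.rTensor M₁ w = y := Module.Flat.lTensor_preserves_injective_linearMap f hf <| by
    rw [← hz, ← LinearMap.comp_apply, LinearMap.lTensor_comp_rTensor,
      ← LinearMap.rTensor_comp_lTensor, LinearMap.comp_apply]
  rw [← hw]
  exact (rTensor_exact M₁ huq hq).apply_apply_eq_zero w

end Diagram

theorem ker_lTensor_mkQ_le_smul_top {R N M : Type*} [CommRing R] [AddCommGroup N] [Module R N]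
    [AddCommGroup M] [Module R M] (I : Ideal R) :
    ((I • ⊤ : Submodule R M).mkQ.lTensor N).ker ≤ I • ⊤ := by
  rw [(lTensor_exact N (LinearMap.exact_subtype_mkQ _)
    (Submodule.mkQ_surjective _)).linearMap_ker_eq]
  rintro _ ⟨y, rfl⟩
  induction y with
  | zero => simp
  | add y z hy hz =>
    rw [map_add]
    exact add_mem hy hz
  | tmul n m =>
    obtain ⟨m, hm⟩ := m
    rw [LinearMap.lTensor_tmul, Submodule.subtype_apply]
    have := Submodule.mem_map_of_mem (f := TensorProduct.mk R N M n) hm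
    rw [Submodule.map_smul''] at this
    exact Submodule.smul_mono le_rfl le_top this

section LocalCriterion

variable {R : Type*} [CommRing R] [IsLocalRing R]

theorem isArtinianRing_quotient_maximalIdeal_pow [IsNoetherianRing R] (i : ℕ) :
    IsArtinianRing (R ⧸ maximalIdeal R ^ i) := by
  rcases subsingleton_or_nontrivial (R ⧸ maximalIdeal R ^ i) with _ | _
  · infer_instance
  have := IsLocalRing.of_surjective' (Ideal.Quotient.mk (maximalIdeal R ^ i))
    Ideal.Quotient.mk_surjective
  rw [isArtinianRing_iff_isNilpotent_maximalIdeal,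
    ← map_maximalIdeal_of_surjective _ Ideal.Quotient.mk_surjective]
  exact ⟨i, by rw [← Ideal.map_pow, Ideal.map_quotient_self, Ideal.zero_eq_bot]⟩

theorem isFiniteLength_quotient_maximalIdeal_pow_smul_top [IsNoetherianRing R] (M : Type*)
    [AddCommGroup M] [Module R M] [Module.Finite R M] (i : ℕ) :
    IsFiniteLength R (M ⧸ (maximalIdeal R ^ i • ⊤ : Submodule R M)) := by
  have := isArtinianRing_quotient_maximalIdeal_pow (R := R) i
  have : Module.Finite (R ⧸ maximalIdeal R ^ i) (M ⧸ (maximalIdeal R ^ i • ⊤ : Submodule R M)) :=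
    .of_restrictScalars_finite R _ _
  exact isFiniteLength_iff_isNoetherian_isArtinian.2
    ⟨inferInstance, isArtinian_of_surjective_algebraMap (R := R ⧸ maximalIdeal R ^ i)
      Ideal.Quotient.mk_surjective⟩

theorem rTensor_injective_of_isFiniteLength {N N' M : Type*} [AddCommGroup N] [Module R N]
    [AddCommGroup N'] [Module R N'] [Module.Flat R N'] {u : N →ₗ[R] N'}
    (hu : Function.Injective (u.rTensor (R ⧸ maximalIdeal R))) [AddCommGroup M] [Module R M]
    (hM : IsFiniteLength R M) : Function.Injective (u.rTensor M) := by
  induction hM with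
  | of_subsingleton => exact Function.injective_of_subsingleton _
  | @of_simple_quotient M _ _ K hK _ ih =>
    refine rTensor_injective_of_exact K.injective_subtype (LinearMap.exact_subtype_mkQ K)
      K.mkQ_surjective ih ?_
    obtain ⟨I, hI, ⟨e⟩⟩ := isSimpleModule_iff_quot_maximal.1 hK
    obtain rfl := eq_maximalIdeal hI
    refine Function.Injective.of_comp (f := e.toLinearMap.lTensor N') ?_
    rw [← LinearMap.coe_comp, LinearMap.lTensor_comp_rTensor, ← LinearMap.rTensor_comp_lTensor,
      LinearMap.coe_comp]
    exact hu.comp (e.lTensor N).injective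

theorem isHausdorff_maximalIdeal_of_isLocalHom (S N : Type*) [CommRing S] [IsLocalRing S]
    [IsNoetherianRing S] [Algebra R S] [IsLocalHom (algebraMap R S)] [AddCommGroup N] [Module R N]
    [Module S N] [IsScalarTower R S N] [Module.Finite S N] : IsHausdorff (maximalIdeal R) N :=
  .of_map (J := maximalIdeal S) (((local_hom_TFAE (algebraMap R S)).out 0 2).1 ‹_›)

theorem rTensor_injective_of_isHausdorff [IsNoetherianRing R] {N N' M : Type*}
    [AddCommGroup N] [Module R N] [AddCommGroup N'] [Module R N'] [Module.Flat R N']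
    {u : N →ₗ[R] N'} (hu : Function.Injective (u.rTensor (R ⧸ maximalIdeal R)))
    [AddCommGroup M] [Module R M] [Module.Finite R M]
    [h : IsHausdorff (maximalIdeal R) (N ⊗[R] M)] :
    Function.Injective (u.rTensor M) := by
  rw [injective_iff_map_eq_zero]
  intro x hx
  rw [← Submodule.mem_bot R, ← h.iInf_pow_smul, Submodule.mem_iInf]
  refine fun i => ker_lTensor_mkQ_le_smul_top _ (rTensor_injective_of_isFiniteLength hu
    (isFiniteLength_quotient_maximalIdeal_pow_smul_top M i) ?_)
  rw [← LinearMap.comp_apply, LinearMap.rTensor_comp_lTensor, ← LinearMap.lTensor_comp_rTensor,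
    LinearMap.comp_apply, hx, map_zero, map_zero]

theorem rTensor_injective_of_finite [IsNoetherianRing R] (S : Type*) {N N' : Type*} [CommRing S]
    [IsLocalRing S] [IsNoetherianRing S] [Algebra R S] [IsLocalHom (algebraMap R S)]
    [AddCommGroup N] [Module R N] [Module S N] [IsScalarTower R S N] [Module.Finite S N]
    [AddCommGroup N'] [Module R N'] [Module.Flat R N'] {u : N →ₗ[R] N'}
    (hu : Function.Injective (u.rTensor (R ⧸ maximalIdeal R))) (M : Type*) [AddCommGroup M]
    [Module R M] [Module.Finite R M] : Function.Injective (u.rTensor M) := by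
  have : Module.Finite S (N ⊗[R] M) := .equiv (AlgebraTensorModule.cancelBaseChange R S S N M)
  have := isHausdorff_maximalIdeal_of_isLocalHom (R := R) S (N ⊗[R] M)
  exact rTensor_injective_of_isHausdorff hu

theorem injective_and_flat_of_rTensor_residue_injective [IsNoetherianRing R] (S : Type*)
    {N N' C : Type*} [CommRing S] [IsLocalRing S] [IsNoetherianRing S] [Algebra R S]
    [IsLocalHom (algebraMap R S)] [AddCommGroup N] [Module R N] [Module S N]
    [IsScalarTower R S N] [Module.Finite S N] [AddCommGroup N'] [Module R N'] [Module.Flat R N']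
    {u : N →ₗ[R] N'} [AddCommGroup C] [Module R C] {q : N' →ₗ[R] C} (huq : Function.Exact u q)
    (hq : Function.Surjective q) (hu : Function.Injective (u.rTensor (R ⧸ maximalIdeal R))) :
    Function.Injective u ∧ Module.Flat R C := by
  refine ⟨?_, Module.Flat.iff_lTensor_injective'.2 fun I =>
    lTensor_injective_of_exact I.injective_subtype (LinearMap.exact_subtype_mkQ I)
      I.mkQ_surjective huq hq (rTensor_injective_of_finite S hu (R ⧸ I))⟩
  have hrid : u ∘ₗ TensorProduct.rid R N = TensorProduct.rid R N' ∘ₗ u.rTensor R := by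
    ext
    simp
  refine Function.Injective.of_comp_right (g := TensorProduct.rid R N) ?_
    (TensorProduct.rid R N).surjective
  have := (TensorProduct.rid R N').injective.comp (rTensor_injective_of_finite S hu R)
  exact (congrArg (fun f : N ⊗[R] R →ₗ[R] N' => Function.Injective f) hrid).mpr this

end LocalCriterion

section RegularSequence

/-- `(N ⧸ tN) ⊗ M ≃ (N ⊗ M) ⧸ t(N ⊗ M)`, by which regularity of a sequence on `N ⊗ M` passes to
its tail after dividing `N` by the first term. -/
def quotSMulTopTensorEquiv {R S : Type*} [CommRing R] [CommRing S] [Algebra R S]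
    (t : S) (N M : Type*) [AddCommGroup N] [Module R N]
    [Module S N] [IsScalarTower R S N] [AddCommGroup M] [Module R M] :
    QuotSMulTop t N ⊗[R] M ≃ₗ[S] QuotSMulTop t (N ⊗[R] M) :=
  (AlgebraTensorModule.cancelBaseChange R S S (QuotSMulTop t N) M).symm ≪≫ₗ
    QuotSMulTop.quotSMulTopTensorEquivQuotSMulTop t (S ⊗[R] M) N ≪≫ₗ
      QuotSMulTop.congr t (AlgebraTensorModule.cancelBaseChange R S S N M)

variable {R S : Type*} [CommRing R] [CommRing S] [IsLocalRing R] [IsLocalRing S]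
  [IsNoetherianRing R] [IsNoetherianRing S] [Algebra R S] [IsLocalHom (algebraMap R S)]

theorem isSMulRegular_and_flat_quotSMulTop {N : Type*} [AddCommGroup N] [Module R N] [Module S N]
    [IsScalarTower R S N] [Module.Finite S N] [Module.Flat R N] {t : S}
    (ht : IsSMulRegular (N ⊗[R] (R ⧸ maximalIdeal R)) t) :
    IsSMulRegular N t ∧ Module.Flat R (QuotSMulTop t N) := by
  have exact : Function.Exact ((LinearMap.lsmul S N t).restrictScalars R)
      ((t • ⊤ : Submodule S N).mkQ.restrictScalars R) := by
    simpa only [LinearMap.coe_restrictScalars] using LinearMap.exact_lsmul_mkQ_smul_top N t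
  have mkQ_surjective :
      Function.Surjective ((t • ⊤ : Submodule S N).mkQ.restrictScalars R) := by
    simpa only [LinearMap.coe_restrictScalars] using Submodule.mkQ_surjective _
  exact injective_and_flat_of_rTensor_residue_injective S exact mkQ_surjective ht

theorem isWeaklyRegular_and_flat_quotient (ts : List S) (N : Type*) [AddCommGroup N] [Module R N]
    [Module S N] [IsScalarTower R S N] [Module.Finite S N] [Module.Flat R N]
    (h : IsWeaklyRegular (N ⊗[R] (R ⧸ maximalIdeal R)) ts) :
    IsWeaklyRegular N ts ∧ Module.Flat R (N ⧸ (Ideal.ofList ts • ⊤ : Submodule S N)) := by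
  induction ts generalizing N with
  | nil =>
    refine ⟨.nil _ _, ?_⟩
    have e : (N ⧸ (Ideal.ofList ([] : List S) • ⊤ : Submodule S N)) ≃ₗ[S] N :=
      Submodule.quotEquivOfEqBot _ (by rw [Ideal.ofList_nil, Submodule.bot_smul])
    exact .of_linearEquiv (e.restrictScalars R)
  | cons t ts ih =>
    rw [isWeaklyRegular_cons_iff] at h
    obtain ⟨ht, hflat⟩ := isSMulRegular_and_flat_quotSMulTop h.1
    obtain ⟨hts, hflat'⟩ := ih (QuotSMulTop t N)
      (((quotSMulTopTensorEquiv t N _).isWeaklyRegular_congr ts).2 h.2)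
    exact ⟨.cons ht hts, .of_linearEquiv
      ((Submodule.quotOfListConsSMulTopEquivQuotSMulTopInner N t ts).restrictScalars R)⟩

theorem isWeaklyRegular_append_map [Module.Flat R S] {rs : List R} {ts : List S}
    (hrs : IsWeaklyRegular R rs)
    (hts : IsWeaklyRegular (S ⧸ (maximalIdeal R).map (algebraMap R S)) ts) :
    IsWeaklyRegular S (ts ++ rs.map (algebraMap R S)) := by
  obtain ⟨hreg, hflat⟩ := isWeaklyRegular_and_flat_quotient (R := R) ts S
    (((Algebra.TensorProduct.quotIdealMapEquivTensorQuot S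
      (maximalIdeal R)).toLinearEquiv.isWeaklyRegular_congr ts).1 hts)
  rw [isWeaklyRegular_append_iff, isWeaklyRegular_map_algebraMap_iff]
  exact ⟨hreg, ((TensorProduct.lid R _).isWeaklyRegular_congr rs).1 hrs.isWeaklyRegular_rTensor⟩

end RegularSequence

section Depth

variable {R S M N : Type*} [CommRing R] [IsLocalRing R] [CommRing S] [IsLocalRing S]
  [AddCommGroup M] [Module R M] [AddCommGroup N] [Module R N]

theorem localDepth_congr (e : M ≃ₗ[R] N) : localDepth R M = localDepth R N := by
  simp only [localDepth, idealDepth, e.isRegular_congr]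

theorem localDepth_eq_iSup : localDepth R M = ⨆ (rs : List R)
    (_ : (∀ r ∈ rs, r ∈ maximalIdeal R) ∧ IsRegular M rs), (rs.length : ℕ∞) := by
  refine le_antisymm (sSup_le ?_) (iSup₂_le fun rs hrs => le_sSup ⟨rs, rfl, hrs⟩)
  rintro _ ⟨rs, rfl, hrs⟩
  exact le_iSup₂_of_le rs hrs le_rfl

theorem length_le_localDepth [Nontrivial M] [Module.Finite R M] {rs : List R}
    (hrs : ∀ r ∈ rs, r ∈ maximalIdeal R) (h : IsWeaklyRegular M rs) :
    rs.length ≤ localDepth R M :=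
  le_sSup ⟨rs, rfl, hrs, (isRegular_iff_isWeaklyRegular_of_subset_maximalIdeal hrs).2 h⟩

theorem localDepth_le_of_ringEquiv (e : R ≃+* S) : localDepth R R ≤ localDepth S S := by
  rw [localDepth_eq_iSup]
  refine iSup₂_le fun rs ⟨hrs, hreg⟩ => ?_
  rw [← List.length_map (as := rs) e]
  refine length_le_localDepth ?_ <| (e.toAddEquiv.isWeaklyRegular_congr
    (List.forall₂_map_right_iff.2 (List.forall₂_same.2 fun r _ x => map_mul e r x))).1
      hreg.toIsWeaklyRegular
  rintro _ hs
  obtain ⟨r, hr, rfl⟩ := List.mem_map.1 hs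
  exact map_nonunit (e : R →+* S) r (hrs r hr)

theorem localDepth_add_localDepth_quotient_le [IsNoetherianRing R] [IsNoetherianRing S]
    [Algebra R S] [IsLocalHom (algebraMap R S)] [Module.Flat R S]
    [IsLocalRing (S ⧸ (maximalIdeal R).map (algebraMap R S))] :
    localDepth R R + localDepth (S ⧸ (maximalIdeal R).map (algebraMap R S))
      (S ⧸ (maximalIdeal R).map (algebraMap R S)) ≤ localDepth S S := by
  rw [localDepth_eq_iSup, localDepth_eq_iSup]
  refine ENat.biSup_add_biSup_le' ⟨[], by simp, .nil _ _⟩ ⟨[], by simp, .nil _ _⟩ ?_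
  rintro rs ⟨hrs, hreg⟩ ts ⟨hts, hreg'⟩
  obtain ⟨ts, rfl⟩ := List.map_surjective_iff.2 Ideal.Quotient.mk_surjective ts
  have hts' : IsWeaklyRegular (S ⧸ (maximalIdeal R).map (algebraMap R S)) ts :=
    (isWeaklyRegular_map_algebraMap_iff _ _ ts).1 hreg'.toIsWeaklyRegular
  rw [List.length_map, add_comm, ← List.length_map (as := rs) (algebraMap R S), ← Nat.cast_add,
    ← List.length_append]
  refine length_le_localDepth ?_ (isWeaklyRegular_append_map hreg.toIsWeaklyRegular hts')
  intro s hs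
  rcases List.mem_append.1 hs with hs | hs
  · exact fun hunit => hts _ (List.mem_map_of_mem hs) (hunit.map _)
  · obtain ⟨r, hr, rfl⟩ := List.mem_map.1 hs
    exact map_nonunit (algebraMap R S) r (hrs r hr)

end Depth

section LocalSerreCondS

variable {R S : Type*} [CommRing R] [IsLocalRing R] [CommRing S] [IsLocalRing S] {n : ℕ}

/-- Serre's inequality `depth R ≥ min n (dim R)` at the closed point of a local ring, so that a ring
satisfies `(S_n)` iff all its localizations at primes satisfy this inequality. The dimension is
encoded as the height of the maximal ideal in order to compare elements of `ℕ∞`. -/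
def LocalSerreCondS (R : Type*) [CommRing R] [IsLocalRing R] (n : ℕ) : Prop :=
  min (n : ℕ∞) (maximalIdeal R).height ≤ localDepth R R

theorem LocalSerreCondS.of_ringEquiv (e : R ≃+* S) (h : LocalSerreCondS R n) :
    LocalSerreCondS S n := by
  have hmap : (maximalIdeal R).map e = maximalIdeal S :=
    map_maximalIdeal_of_surjective (e : R →+* S) e.surjective
  rw [LocalSerreCondS, ← hmap, e.height_map]
  exact h.trans (localDepth_le_of_ringEquiv e)

theorem LocalSerreCondS.of_flat [IsNoetherianRing R] [IsNoetherianRing S] [Algebra R S]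
    [IsLocalHom (algebraMap R S)] [Module.Flat R S] (hR : LocalSerreCondS R n)
    [IsLocalRing (S ⧸ (maximalIdeal R).map (algebraMap R S))]
    (hF : LocalSerreCondS (S ⧸ (maximalIdeal R).map (algebraMap R S)) n) :
    LocalSerreCondS S n := by
  have hdim := Ideal.height_le_height_add_of_liesOver (maximalIdeal R) (maximalIdeal S)
  rw [map_maximalIdeal_of_surjective _ Ideal.Quotient.mk_surjective] at hdim
  refine le_trans ?_ ((add_le_add hR hF).trans localDepth_add_localDepth_quotient_le)
  refine (min_le_min_left _ hdim).trans ?_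
  rw [min_add_distrib]
  exact min_le_right _ _

theorem isDomain_of_isPrincipal_maximalIdeal [IsNoetherianRing R]
    (h : (maximalIdeal R).IsPrincipal) (h0 : (maximalIdeal R).height ≠ 0) : IsDomain R := by
  obtain ⟨t, ht⟩ := h
  obtain ⟨p, hp, hpm⟩ := Ideal.exists_minimalPrimes_le (bot_le : ⊥ ≤ maximalIdeal R)
  -- A minimal prime `p` not containing the generator `t` satisfies `p = t p`: apply Nakayama.
  have htp : t ∉ p := fun htp => h0 <| Ideal.height_eq_zero_iff.2 <| by
    have hmp : maximalIdeal R ≤ p := by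
      rwa [ht, Ideal.submodule_span_eq, Ideal.span_singleton_le_iff_mem]
    rwa [le_antisymm hmp hpm]
  have hpp : p ≤ maximalIdeal R • p := fun x hx => by
    obtain ⟨y, rfl⟩ := Ideal.mem_span_singleton.1 (ht.le (hpm hx))
    exact Submodule.smul_mem_smul (ht.ge (Ideal.mem_span_singleton_self t))
      ((hp.1.1.mem_or_mem hx).resolve_left htp)
  have hbot : p = ⊥ := Submodule.eq_bot_of_le_smul_of_le_jacobson_bot _ p
    (IsNoetherian.noetherian p) hpp (maximalIdeal_le_jacobson ⊥)
  have : (⊥ : Ideal R).IsPrime := hbot ▸ hp.1.1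
  exact .of_bot_isPrime R

theorem LocalSerreCondS.of_isPrincipal_maximalIdeal [IsNoetherianRing R]
    (h : (maximalIdeal R).IsPrincipal) : LocalSerreCondS R n := by
  refine min_le_of_right_le ?_
  by_cases h0 : (maximalIdeal R).height = 0
  · exact h0.trans_le zero_le
  have := isDomain_of_isPrincipal_maximalIdeal h h0
  have hle : (maximalIdeal R).height ≤ 1 :=
    Ideal.height_le_one_of_isPrincipal_of_mem_minimalPrimes (maximalIdeal R) (maximalIdeal R)
      (by rw [Ideal.minimalPrimes_eq_subsingleton_self]; rfl)
  obtain ⟨t, ht⟩ := h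
  have ht0 : t ≠ 0 := by
    rintro rfl
    exact h0 (by rw [ht]; simp)
  refine hle.trans (length_le_localDepth (M := R) (rs := [t]) ?_ ?_)
  · simp [ht]
  · exact (isWeaklyRegular_singleton_iff R t).2 (IsSMulRegular.of_ne_zero ht0)

end LocalSerreCondS

section RingSerreCondS

/-- The localization of a ring as a module over itself is the localized ring, so that the conditions
on the modules `R_P` can be read off the local rings `R_P`. -/
def localizedModuleSelfEquiv {R : Type*} [CommRing R] (S : Submonoid R) :
    LocalizedModule S R ≃ₗ[Localization S] Localization S :=
  LocalizedModule.equivTensorProduct S R ≪≫ₗ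
    TensorProduct.AlgebraTensorModule.rid R (Localization S) (Localization S)

variable {R : Type*} [CommRing R]

theorem depthAt_self (P : PrimeSpectrum R) :
    depthAt R R P =
      localDepth (Localization.AtPrime P.asIdeal) (Localization.AtPrime P.asIdeal) :=
  localDepth_congr (localizedModuleSelfEquiv P.asIdeal.primeCompl)

theorem heightAt_self (P : PrimeSpectrum R) :
    heightAt R R P = (maximalIdeal (Localization.AtPrime P.asIdeal)).height := by
  rw [maximalIdeal_height_eq_ringKrullDim, ← Module.supportDim_self_eq_ringKrullDim]
  exact Module.supportDim_eq_of_equiv (localizedModuleSelfEquiv P.asIdeal.primeCompl)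

theorem ringSerreCondS_iff {n : ℕ} : RingSerreCondS R n ↔
    ∀ (P : Ideal R) [P.IsPrime], LocalSerreCondS (Localization.AtPrime P) n := by
  have support_self : Module.support R R = Set.univ := by
    rw [Module.support_eq_zeroLocus, Module.annihilator_eq_bot.2 inferInstance]
    exact PrimeSpectrum.zeroLocus_singleton_zero
  simp only [RingSerreCondS, SerreCondS, support_self, Set.mem_univ, forall_const, depthAt_self,
    heightAt_self]
  refine ⟨fun h P _ => WithBot.coe_le_coe.1 (h ⟨P, ‹_›⟩),
    fun h P => WithBot.coe_le_coe.2 (h P.asIdeal)⟩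

end RingSerreCondS

section Flat

variable {n : ℕ} {R S : Type*} [CommRing R] [CommRing S]

theorem RingSerreCondS.of_ringEquiv (e : R ≃+* S) (h : RingSerreCondS R n) : RingSerreCondS S n :=
  ringSerreCondS_iff.2 fun P _ =>
    (ringSerreCondS_iff.1 h (P.comap e)).of_ringEquiv (Localization.localRingEquiv _ P e rfl)

variable [Algebra R S] [Module.Flat R S] [IsNoetherianRing R] [IsNoetherianRing S]

theorem LocalSerreCondS.localization_of_flat (p : Ideal R) [p.IsPrime] (P : Ideal S) [P.IsPrime]
    [P.LiesOver p] (hp : LocalSerreCondS (Localization.AtPrime p) n)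
    [IsLocalRing (Localization.AtPrime P ⧸ p.map (algebraMap R (Localization.AtPrime P)))]
    (hF : LocalSerreCondS
      (Localization.AtPrime P ⧸ p.map (algebraMap R (Localization.AtPrime P))) n) :
    LocalSerreCondS (Localization.AtPrime P) n := by
  let := Localization.AtPrime.algebraOfLiesOver p P
  have hmap : p.map (algebraMap R (Localization.AtPrime P)) =
      (maximalIdeal (Localization.AtPrime p)).map
        (algebraMap (Localization.AtPrime p) (Localization.AtPrime P)) := by
    rw [← Localization.AtPrime.map_eq_maximalIdeal, Ideal.map_map, ← IsScalarTower.algebraMap_eq]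
  have e := Ideal.quotEquivOfEq hmap
  have : IsLocalHom (algebraMap (Localization.AtPrime p) (Localization.AtPrime P)) :=
    Localization.isLocalHom_localRingHom p P (algebraMap R S) Ideal.LiesOver.over
  have := e.isLocalRing
  exact hp.of_flat (hF.of_ringEquiv e)

theorem LocalSerreCondS.localization_of_le_map_under (hR : RingSerreCondS R n) (P : Ideal S)
    [P.IsPrime] (hP : P ≤ (P.under R).map (algebraMap R S)) :
    LocalSerreCondS (Localization.AtPrime P) n := by
  have hmap : (P.under R).map (algebraMap R (Localization.AtPrime P)) =
      maximalIdeal (Localization.AtPrime P) := by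
    rw [IsScalarTower.algebraMap_eq R S, ← Ideal.map_map, ← le_antisymm hP Ideal.map_comap_le,
      Localization.AtPrime.map_eq_maximalIdeal]
  have e : ResidueField (Localization.AtPrime P) ≃+* _ := Ideal.quotEquivOfEq hmap.symm
  have := e.isLocalRing
  refine .localization_of_flat (P.under R) P (ringSerreCondS_iff.1 hR _) (.of_ringEquiv e ?_)
  exact .of_isPrincipal_maximalIdeal (IsPrincipalIdealRing.principal _)

theorem RingSerreCondS.of_flat (hR : RingSerreCondS R n)
    (hF : ∀ (p : Ideal R) [p.IsPrime], RingSerreCondS (p.Fiber S) n) : RingSerreCondS S n := by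
  have localization_comap (p : Ideal R) [p.IsPrime] (q : Ideal (p.Fiber S)) [q.IsPrime] :
      LocalSerreCondS (Localization.AtPrime (q.comap
        (Algebra.TensorProduct.includeRight : S →ₐ[R] p.Fiber S))) n := by
    have e := Ideal.Fiber.algEquivAux₂ p q
    rw [Ideal.map_map, ← IsScalarTower.algebraMap_eq] at e
    have := e.toRingEquiv.isLocalRing
    exact .localization_of_flat p _ (ringSerreCondS_iff.1 hR p)
      ((ringSerreCondS_iff.1 (hF p) q).of_ringEquiv e.toRingEquiv)
  refine ringSerreCondS_iff.2 fun P _ => ?_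
  obtain ⟨q, hq⟩ := (PrimeSpectrum.primesOverOrderIsoFiber R S (P.under R)).symm.surjective
    ⟨P, ‹_›, ⟨rfl⟩⟩
  exact (localization_comap _ q.asIdeal).of_ringEquiv
    (Localization.localRingEquiv _ P (.refl S) (congrArg Subtype.val hq))

end Flat

section FieldExtension

theorem RingSerreCondS.of_surjectiveOnStalks {n : ℕ} {R S : Type*} [CommRing R]
    [IsPrincipalIdealRing R] [CommRing S] [IsNoetherianRing S] {φ : R →+* S}
    (hφ : φ.SurjectiveOnStalks) : RingSerreCondS S n := by
  refine ringSerreCondS_iff.2 fun P _ => .of_isPrincipal_maximalIdeal ?_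
  rw [← map_maximalIdeal_of_surjective _ (hφ P ‹_›), ← Localization.AtPrime.map_eq_maximalIdeal]
  exact ((IsPrincipalIdealRing.principal _).map_ringHom _).map_ringHom _

theorem isNoetherianRing_tensor_of_essFiniteType (R A B : Type*) [CommRing R] [CommRing A]
    [CommRing B] [Algebra R A] [Algebra R B] [Algebra.EssFiniteType R A] [IsNoetherianRing B] :
    IsNoetherianRing (A ⊗[R] B) := by
  have := Algebra.EssFiniteType.isNoetherianRing B (B ⊗[R] A)
  exact isNoetherianRing_of_ringEquiv _ (Algebra.TensorProduct.comm R B A).toRingEquiv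

open IntermediateField

section Simple

variable {n : ℕ} {k L : Type*} [Field k] [Field L] [Algebra k L] {α : L}

theorem surjectiveOnStalks_aeval (hα : k⟮α⟯ = ⊤) :
    (Polynomial.aeval (R := k) α).SurjectiveOnStalks := by
  refine RingHom.surjectiveOnStalks_of_exists_div fun x => ?_
  obtain ⟨f, g, rfl⟩ := (mem_adjoin_simple_iff k x).1 (hα ▸ mem_top)
  by_cases hg : Polynomial.aeval α g = 0
  · exact ⟨0, 1, by simp, by simp [hg]⟩
  · exact ⟨f, g, .mk0 _ hg, mul_div_cancel₀ _ hg⟩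

theorem essFiniteType_of_adjoin_eq_top (hα : k⟮α⟯ = ⊤) : Algebra.EssFiniteType k L :=
  fg_top_iff.1 (hα ▸ fg_adjoin_of_finite (Set.finite_singleton α))

theorem ringSerreCondS_tensor_field_of_adjoin_eq_top (hα : k⟮α⟯ = ⊤) (K : Type*) [Field K]
    [Algebra k K] : RingSerreCondS (K ⊗[k] L) n := by
  have := essFiniteType_of_adjoin_eq_top hα
  have := Algebra.EssFiniteType.isNoetherianRing K (K ⊗[k] L)
  have : IsPrincipalIdealRing (K ⊗[k] Polynomial k) :=
    .of_surjective (polyEquivTensor k K) (polyEquivTensor k K).surjective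
  exact .of_surjectiveOnStalks (RingHom.SurjectiveOnStalks.tensorProductMap (f := AlgHom.id k K)
    (RingHom.surjectiveOnStalks_of_surjective Function.surjective_id) (surjectiveOnStalks_aeval hα))

theorem RingSerreCondS.tensor_of_adjoin_eq_top (hα : k⟮α⟯ = ⊤) {R : Type*} [CommRing R]
    [Algebra k R] [IsNoetherianRing R] (hR : RingSerreCondS R n) :
    RingSerreCondS (R ⊗[k] L) n := by
  have := essFiniteType_of_adjoin_eq_top hα
  have := Algebra.EssFiniteType.isNoetherianRing R (R ⊗[k] L)
  exact hR.of_flat fun p _ => (ringSerreCondS_tensor_field_of_adjoin_eq_top hα _).of_ringEquiv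
    (Algebra.TensorProduct.cancelBaseChange k R R p.ResidueField L).symm.toRingEquiv

end Simple

variable {n : ℕ} {k K B : Type*} [Field k] [Field K] [Algebra k K] [CommRing B] [Algebra k B]

theorem adjoin_adjoinSimple_gen (α : K) : k⟮AdjoinSimple.gen k α⟯ = ⊤ := by
  apply map_injective k⟮α⟯.val
  rw [adjoin_map, Set.image_singleton, ← AlgHom.fieldRange_eq_map, fieldRange_val]
  simp

theorem exists_fg_subset_range_map_val {s : Set (K ⊗[k] B)} (hs : s.Finite) :
    ∃ F : IntermediateField k K, F.FG ∧
      s ⊆ Set.range (Algebra.TensorProduct.map F.val (AlgHom.id k B)) := by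
  obtain ⟨M, hM, hsM⟩ := TensorProduct.exists_finite_submodule_left_of_setFinite s hs
  obtain ⟨T, rfl⟩ := Module.Finite.iff_fg.1 hM
  refine ⟨adjoin k T, fg_adjoin_finset T, hsM.trans ?_⟩
  refine TensorProduct.range_map_mono (b := (adjoin k (T : Set K)).val.toLinearMap)
    (d := LinearMap.id) ?_ le_rfl
  rw [Submodule.range_subtype, Submodule.span_le]
  exact fun x hx => ⟨⟨x, subset_adjoin k _ hx⟩, rfl⟩

variable [IsNoetherianRing B]

theorem RingSerreCondS.tensor_of_fg (hB : RingSerreCondS B n) {F : IntermediateField k K}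
    (hF : F.FG) : RingSerreCondS (F ⊗[k] B) n := by
  refine (induction_on_adjoin_fg (fun F => F.FG ∧ RingSerreCondS (F ⊗[k] B) n)
    ⟨fg_bot, ?_⟩ (fun F α ⟨hF, h⟩ => ⟨?_, ?_⟩) F hF).2
  · exact hB.of_ringEquiv ((Algebra.TensorProduct.congr (botEquiv k K) .refl).trans
      (Algebra.TensorProduct.lid k B)).symm.toRingEquiv
  · rw [restrictScalars_adjoin_eq_sup]
    exact fg_sup hF (fg_adjoin_of_finite (Set.finite_singleton α))
  · have := essFiniteType_iff.2 hF
    have := isNoetherianRing_tensor_of_essFiniteType k F B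
    exact (h.tensor_of_adjoin_eq_top (adjoin_adjoinSimple_gen α)).of_ringEquiv
      ((Algebra.TensorProduct.comm F (F ⊗[k] B) F⟮α⟯).trans
        (Algebra.TensorProduct.cancelBaseChange k F F F⟮α⟯ B)).toRingEquiv

theorem RingSerreCondS.tensor_field [IsNoetherianRing (K ⊗[k] B)] (hB : RingSerreCondS B n) :
    RingSerreCondS (K ⊗[k] B) n := by
  refine ringSerreCondS_iff.2 fun P _ => ?_
  obtain ⟨s, hs⟩ := IsNoetherian.noetherian P
  obtain ⟨F, hF, hsF⟩ := exists_fg_subset_range_map_val s.finite_toSet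
  have := essFiniteType_iff.2 hF
  have := isNoetherianRing_tensor_of_essFiniteType k F B
  let := (Algebra.TensorProduct.map F.val (AlgHom.id k B)).toAlgebra
  have : Module.Flat (F ⊗[k] B) (K ⊗[k] B) :=
    RingHom.Flat.tensorProductMap (.of_isField (Field.toIsField F) F.val.toRingHom) (.id B)
  refine .localization_of_le_map_under (hB.tensor_of_fg hF) P ?_
  rw [← hs]
  refine Ideal.span_le.2 fun z hz => ?_
  obtain ⟨x, rfl⟩ := hsF hz
  exact Ideal.mem_map_of_mem (algebraMap (F ⊗[k] B) (K ⊗[k] B)) (Ideal.subset_span hz)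

end FieldExtension

theorem SerreCondS.condC_succ {A M : Type*} [CommRing A] [AddCommGroup M] [Module A M] {n : ℕ}
    (h : SerreCondS A n M) : CondC A (n + 1) M := by
  intro P hP
  refine le_trans ?_ (add_le_add_left (h P hP) 1)
  rw [← min_add_add_right]
  refine min_le_min (by simp) ?_
  exact le_add_of_nonneg_right zero_le_one

theorem tensor_condC_succ_of_serreS_general (k : Type u) [Field k] (n : ℕ)
    (A : Type v) (B : Type w) [CommRing A] [CommRing B] [Algebra k A] [Algebra k B]
    [IsNoetherianRing A] [IsNoetherianRing B] [IsNoetherianRing (A ⊗[k] B)]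
    (hA : RingSerreCondS A n) (hB : RingSerreCondS B n) : RingSerreCondS (A ⊗[k] B) n := by
  refine hA.of_flat fun p _ => ?_
  have e : p.Fiber (A ⊗[k] B) ≃+* p.ResidueField ⊗[k] B :=
    (Algebra.TensorProduct.cancelBaseChange k A A p.ResidueField B).toRingEquiv
  have := isNoetherianRing_tensor_of_essFiniteType A p.ResidueField (A ⊗[k] B)
  have := isNoetherianRing_of_ringEquiv _ e
  exact hB.tensor_field.of_ringEquiv e.symm

theorem tensor_condC_succ_of_serreS (k : Type u) [Field k] (n : ℕ)
    (A : Type v) (B : Type w) [CommRing A] [CommRing B] [Algebra k A] [Algebra k B]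
    [IsNoetherianRing A] [IsNoetherianRing B] [IsNoetherianRing (A ⊗[k] B)]
    (hA : RingSerreCondS A n) (hB : RingSerreCondS B n) :
    RingCondC (A ⊗[k] B) (n + 1) :=
  (tensor_condC_succ_of_serreS_general k n A B hA hB).condC_succ

end
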